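/- Let (X,d) be a compact metric space of negative type. Then X has at most one diversity-maximizing measure: if μ and ν are Borel probability measures on X that both minimize ρ ↦ ⟨ρ,ρ⟩_W over Borel probability measures, then μ = ν. -/

import Mathlib

open MeasureTheory Real

/-- The similarity form ⟨μ,ν⟩_W = ∬ e^{-d(x,y)} dμ(x) dν(y) for (nonnegative) Borel
measures. -/
noncomputable def simFormP {X : Type*} [MetricSpace X] [MeasurableSpace X]
    (μ ν : Measure X) : ℝ :=
  ∫ x, ∫ y, Real.exp (-dist x y) ∂ν ∂μ

/-!
If `φ` realises the negative type, then `e^{-d(x,y)} = e^{-‖φ x - φ y‖²}` is the pull-back of the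
Gaussian kernel, which is positive semidefinite. A feature map `Φ` of that kernel therefore turns
`⟨μ,μ⟩_W` into the squared norm of the mean `∫ Φ (φ x) dμ(x)`, and strict convexity of the norm
forces two minimizers to have the same mean. Pairing the mean with `Φ a` gives
`∫ e^{-‖φ x - a‖²} dμ(x)`, so the mean determines the moment generating function of the law of `φ`
weighted by `e^{-‖·‖²}`. Its analytic continuation is the characteristic function, which determines
the law of `φ` and hence `μ`.
-/

open TopologicalSpace Topology
open scoped InnerProductSpace Matrix

section PositiveSemidefiniteKernels

variable {ι E : Type*} [NormedAddCommGroup E] [InnerProductSpace ℝ E]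

theorem posSemidef_of_tendsto {α R : Type*} [Ring R] [PartialOrder R] [StarRing R]
    [TopologicalSpace R] [IsTopologicalRing R] [ContinuousStar R] [OrderClosedTopology R]
    {l : Filter α} [l.NeBot] {A : α → Matrix ι ι R} {B : Matrix ι ι R}
    (hA : ∀ a, (A a).PosSemidef) (hlim : Filter.Tendsto A l (𝓝 B)) : B.PosSemidef := by
  have hentry (i j : ι) : Filter.Tendsto (fun a ↦ A a i j) l (𝓝 (B i j)) :=
    tendsto_pi_nhds.1 (tendsto_pi_nhds.1 hlim i) j
  refine ⟨?_, fun x ↦ ?_⟩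
  · ext i j
    exact tendsto_nhds_unique (hentry j i).star
      ((hentry i j).congr fun a ↦ ((hA a).isHermitian.apply i j).symm)
  · exact ge_of_tendsto' (tendsto_finsetSum _ fun i _ ↦ tendsto_finsetSum _ fun j _ ↦
      ((hentry i j).const_mul _).mul_const _) fun a ↦ (hA a).2 x

theorem posSemidef_gram_real (v : ι → E) : (Matrix.gram ℝ v).PosSemidef := by
  refine ⟨Matrix.isHermitian_gram ℝ v, fun x ↦ ?_⟩
  calc 0 ≤ ⟪x.sum fun i c ↦ c • v i, x.sum fun j c ↦ c • v j⟫_ℝ := real_inner_self_nonneg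
    _ = x.sum fun i c ↦ x.sum fun j d ↦ star c * Matrix.gram ℝ v i j * d := by
      simp only [Finsupp.sum, sum_inner, inner_sum, real_inner_smul_left, real_inner_smul_right,
        Matrix.gram_apply, star_trivial, mul_comm]
      exact Finset.sum_comm

theorem posSemidef_map_pow {A : Matrix ι ι ℝ} (hA : A.PosSemidef) (n : ℕ) :
    (A.map (· ^ n)).PosSemidef := by
  induction n with
  | zero =>
    convert posSemidef_gram_real fun _ : ι ↦ (1 : ℝ) using 1
    ext i j
    simp
  | succ n ih =>
    have hsucc : A.map (· ^ (n + 1)) = A.map (· ^ n) ⊙ A := by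
      ext i j
      simp [pow_succ]
    rw [hsucc]
    exact ih.hadamard hA

theorem posSemidef_map_exp {A : Matrix ι ι ℝ} (hA : A.PosSemidef) : (A.map exp).PosSemidef := by
  have hpartial (n : ℕ) :
      (∑ k ∈ Finset.range n, (k.factorial : ℝ)⁻¹ • A.map (· ^ k)).PosSemidef :=
    Matrix.posSemidef_sum _ fun k _ ↦ (posSemidef_map_pow hA k).smul (by positivity)
  refine posSemidef_of_tendsto (l := Filter.atTop) hpartial <|
    tendsto_pi_nhds.2 fun i ↦ tendsto_pi_nhds.2 fun j ↦ ?_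
  have hseries := (NormedSpace.expSeries_div_hasSum_exp (A i j)).tendsto_sum_nat
  rw [← exp_eq_exp_ℝ] at hseries
  simpa [Matrix.sum_apply, div_eq_inv_mul] using hseries

-- The feature space is Moore's reproducing kernel Hilbert space; Mathlib's version is
-- operator-valued, so `A` enters it through the scalar operators `A i j • id` on `ℝ`.
theorem exists_gram_eq_of_posSemidef.{u} {ι : Type u} {A : Matrix ι ι ℝ} (hA : A.PosSemidef) :
    ∃ (F : Type u) (_ : NormedAddCommGroup F) (_ : InnerProductSpace ℝ F) (_ : CompleteSpace F)
      (Φ : ι → F), Matrix.gram ℝ Φ = A := by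
  let K : Matrix ι ι (ℝ →L[ℝ] ℝ) := A.map (· • ContinuousLinearMap.id ℝ ℝ)
  have hsymm (i j : ι) : A j i = A i j := hA.isHermitian.apply i j
  have hK : K.PosSemidef := by
    have htfae := (RKHS.posSemidef_tfae (K := K)).out 0 2
    refine htfae.mpr ⟨?_, fun v ↦ ?_⟩
    · ext i j
      simp [K, hsymm j i, ← ContinuousLinearMap.one_def]
    · refine (hA.2 v).trans_eq (Finset.sum_congr rfl fun i _ ↦ Finset.sum_congr rfl fun j _ ↦ ?_)
      simp [K, hsymm i j, mul_comm, mul_left_comm]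
  have : Fact K.PosSemidef := ⟨hK⟩
  refine ⟨RKHS.OfKernel K, inferInstance, inferInstance, inferInstance,
    fun i ↦ RKHS.kerFun (RKHS.OfKernel K) i 1, ?_⟩
  ext i j
  rw [Matrix.gram_apply, ← RKHS.kernel_inner, RKHS.OfKernel.kernel_ofKernel]
  simp [K, hsymm i j]

end PositiveSemidefiniteKernels

section FeatureMaps

variable {X F : Type*} [NormedAddCommGroup F] [InnerProductSpace ℝ F] {Φ : X → F}

theorem norm_eq_one_of_gram_self_eq_one (h : ∀ x, Matrix.gram ℝ Φ x x = 1) (x : X) :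
    ‖Φ x‖ = 1 := by
  rw [norm_eq_sqrt_real_inner, ← Matrix.gram_apply, h, sqrt_one]

theorem continuous_of_continuous_gram [TopologicalSpace X]
    (h : Continuous (Function.uncurry (Matrix.gram ℝ Φ))) : Continuous Φ := by
  refine continuous_iff_continuousAt.2 fun x ↦ tendsto_iff_norm_sub_tendsto_zero.2 ?_
  let G : X → X → ℝ := Matrix.gram ℝ Φ
  have hnorm (y : X) : ‖Φ y - Φ x‖ = √(G y y - 2 * G y x + G x x) := by
    rw [← sqrt_sq (norm_nonneg (Φ y - Φ x)), norm_sub_sq_real, ← real_inner_self_eq_norm_sq,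
      ← real_inner_self_eq_norm_sq]
    rfl
  have hcont : Continuous fun y ↦ √(G y y - 2 * G y x + G x x) := by
    have hdiag : Continuous fun y ↦ G y y := h.comp (continuous_id.prodMk continuous_id)
    have hslice : Continuous fun y ↦ G y x := h.comp (continuous_id.prodMk continuous_const)
    exact ((hdiag.sub (continuous_const.mul hslice)).add continuous_const).sqrt
  have hzero : √(G x x - 2 * G x x + G x x) = 0 := by
    rw [show G x x - 2 * G x x + G x x = 0 by ring, sqrt_zero]
  simpa only [hnorm, hzero] using hcont.tendsto x

theorem integrable_of_continuous_gram [TopologicalSpace X] [SecondCountableTopology X]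
    [MeasurableSpace X] [OpensMeasurableSpace X] (μ : Measure X) [IsFiniteMeasure μ]
    (h : Continuous (Function.uncurry (Matrix.gram ℝ Φ)))
    (hone : ∀ x, Matrix.gram ℝ Φ x x = 1) : Integrable Φ μ :=
  .of_bound (continuous_of_continuous_gram h).stronglyMeasurable.aestronglyMeasurable 1
    (.of_forall fun x ↦ (norm_eq_one_of_gram_self_eq_one hone x).le)

theorem inner_integral_integral [CompleteSpace F] {Y : Type*} [MeasurableSpace X]
    [MeasurableSpace Y] {Ψ : Y → F} {μ : Measure X} {ν : Measure Y}
    (hΦ : Integrable Φ μ) (hΨ : Integrable Ψ ν) :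
    ⟪∫ x, Φ x ∂μ, ∫ y, Ψ y ∂ν⟫_ℝ = ∫ x, ∫ y, ⟪Φ x, Ψ y⟫_ℝ ∂ν ∂μ := by
  rw [real_inner_comm, ← integral_inner hΦ]
  simp only [real_inner_comm, ← integral_inner hΨ]

end FeatureMaps

section GaussianKernel

/-- The Gaussian kernel `e^{-‖x - y‖²}` of a normed space, as a matrix indexed by its points. -/
noncomputable def gaussianKernel (E : Type*) [NormedAddCommGroup E] : Matrix E E ℝ :=
  .of fun x y ↦ exp (-‖x - y‖ ^ 2)

variable {E : Type*} [NormedAddCommGroup E]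

theorem gaussianKernel_self (x : E) : gaussianKernel E x x = 1 := by
  simp [gaussianKernel]

theorem continuous_gaussianKernel : Continuous (Function.uncurry (gaussianKernel E)) := by
  change Continuous fun p : E × E ↦ exp (-‖p.1 - p.2‖ ^ 2)
  fun_prop

theorem integrable_gaussianKernel [MeasurableSpace E] [OpensMeasurableSpace E] (μ : Measure E)
    [IsFiniteMeasure μ] (a : E) : Integrable (gaussianKernel E a) μ := by
  have hcont : Continuous (gaussianKernel E a) := continuous_gaussianKernel.uncurry_left a
  refine .of_bound hcont.aestronglyMeasurable 1 (.of_forall fun x ↦ ?_)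
  simp [gaussianKernel]

variable [InnerProductSpace ℝ E]

theorem gaussianKernel_eq_mul_exp_inner (x y : E) :
    gaussianKernel E x y = exp (-‖x‖ ^ 2) * exp (-‖y‖ ^ 2) * exp (2 * ⟪x, y⟫_ℝ) := by
  rw [gaussianKernel, Matrix.of_apply, ← exp_add, ← exp_add, norm_sub_sq_real]
  ring_nf

theorem exp_neg_norm_sq_mul_exp_inner (x a : E) :
    exp (-‖x‖ ^ 2) * exp ⟪x, a⟫_ℝ =
      exp (‖(2 : ℝ)⁻¹ • a‖ ^ 2) * gaussianKernel E ((2 : ℝ)⁻¹ • a) x := by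
  rw [gaussianKernel_eq_mul_exp_inner, real_inner_smul_left, mul_inv_cancel_left₀ two_ne_zero,
    real_inner_comm, exp_neg (‖(2 : ℝ)⁻¹ • a‖ ^ 2)]
  field_simp

theorem posSemidef_gaussianKernel : (gaussianKernel E).PosSemidef := by
  have hexp : (((2 : ℝ) • Matrix.gram ℝ (id : E → E)).map exp).PosSemidef :=
    posSemidef_map_exp ((posSemidef_gram_real id).smul zero_le_two)
  have hfactor : gaussianKernel E =
      Matrix.gram ℝ (fun x ↦ exp (-‖x‖ ^ 2)) ⊙ ((2 : ℝ) • Matrix.gram ℝ (id : E → E)).map exp := by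
    ext x y
    simp [gaussianKernel_eq_mul_exp_inner, Matrix.gram_apply, mul_comm]
  rw [hfactor]
  exact (posSemidef_gram_real _).hadamard hexp

end GaussianKernel

section GaussianKernelIsCharacteristic

variable {E : Type*} [NormedAddCommGroup E] [InnerProductSpace ℝ E] [CompleteSpace E]
  [SecondCountableTopology E] [MeasurableSpace E] [BorelSpace E]
  {μ ν : Measure E} [IsFiniteMeasure μ] [IsFiniteMeasure ν]

open ProbabilityTheory in
theorem ext_of_integral_exp_inner_eq (hint : ∀ a : E, Integrable (fun x ↦ exp ⟪x, a⟫_ℝ) μ)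
    (h : ∀ a : E, ∫ x, exp ⟪x, a⟫_ℝ ∂μ = ∫ x, exp ⟪x, a⟫_ℝ ∂ν) : μ = ν := by
  refine Measure.ext_of_charFun (funext fun a ↦ ?_)
  have hmgf : mgf (⟪·, a⟫_ℝ) μ = mgf (⟪·, a⟫_ℝ) ν := by
    ext t
    simpa only [mgf, ← real_inner_smul_right] using h (t • a)
  have huniv : integrableExpSet (⟪·, a⟫_ℝ) μ = Set.univ :=
    Set.eq_univ_of_forall fun t ↦ by
      simpa only [integrableExpSet, Set.mem_ofPred_eq, ← real_inner_smul_right] using hint (t • a)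
  have hzero : μ = 0 ↔ ν = 0 := by
    have hmass : μ.real Set.univ = ν.real Set.univ := by simpa using h 0
    rw [← Measure.measure_univ_eq_zero, ← measureReal_eq_zero_iff, hmass, measureReal_eq_zero_iff,
      Measure.measure_univ_eq_zero]
  have hI : complexMGF (⟪·, a⟫_ℝ) μ Complex.I = complexMGF (⟪·, a⟫_ℝ) ν Complex.I :=
    eqOn_complexMGF_of_mgf' hmgf hzero (by simp [huniv])
  simpa only [charFun_apply, complexMGF, mul_comm] using hI

theorem ext_of_integral_gaussianKernel_eq
    (h : ∀ a : E, ∫ x, gaussianKernel E a x ∂μ = ∫ x, gaussianKernel E a x ∂ν) : μ = ν := by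
  let w : E → ENNReal := fun x ↦ ENNReal.ofReal (exp (-‖x‖ ^ 2))
  have hw : Measurable w := by fun_prop
  have hw_pos (x : E) : w x ≠ 0 := (ENNReal.ofReal_pos.2 (exp_pos _)).ne'
  have hw_top (x : E) : w x ≠ ⊤ := ENNReal.ofReal_ne_top
  have hweight (a x : E) : (w x).toReal • exp ⟪x, a⟫_ℝ =
      exp (‖(2 : ℝ)⁻¹ • a‖ ^ 2) * gaussianKernel E ((2 : ℝ)⁻¹ • a) x := by
    rw [smul_eq_mul, ENNReal.toReal_ofReal (exp_pos _).le, exp_neg_norm_sq_mul_exp_inner]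
  have hkernel : gaussianKernel E 0 = fun x ↦ exp (-‖x‖ ^ 2) := by
    ext x
    simp [gaussianKernel]
  have hfinite (ρ : Measure E) [IsFiniteMeasure ρ] : IsFiniteMeasure (ρ.withDensity w) :=
    isFiniteMeasure_withDensity_ofReal (hkernel ▸ (integrable_gaussianKernel ρ 0).hasFiniteIntegral)
  have := hfinite μ
  have := hfinite ν
  have hweighted : μ.withDensity w = ν.withDensity w := by
    refine ext_of_integral_exp_inner_eq (fun a ↦ ?_) fun a ↦ ?_
    · rw [integrable_withDensity_iff_integrable_smul' hw (.of_forall fun x ↦ (hw_top x).lt_top)]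
      simpa only [hweight] using (integrable_gaussianKernel μ _).const_mul _
    · simp only [integral_withDensity_eq_integral_toReal_smul hw
        (.of_forall fun x ↦ (hw_top x).lt_top), hweight, integral_const_mul, h]
  rw [← withDensity_inv_same (μ := μ) hw (.of_forall hw_pos) (.of_forall hw_top), hweighted,
    withDensity_inv_same hw (.of_forall hw_pos) (.of_forall hw_top)]

theorem ext_of_integral_gaussianKernel_feature_eq {F : Type*} [NormedAddCommGroup F]
    [InnerProductSpace ℝ F] [CompleteSpace F] {Φ : E → F}
    (hΦ : Matrix.gram ℝ Φ = gaussianKernel E) (h : ∫ x, Φ x ∂μ = ∫ x, Φ x ∂ν) : μ = ν := by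
  have hint (ρ : Measure E) [IsFiniteMeasure ρ] : Integrable Φ ρ :=
    integrable_of_continuous_gram ρ (hΦ ▸ continuous_gaussianKernel)
      (hΦ ▸ gaussianKernel_self)
  have heval (ρ : Measure E) [IsFiniteMeasure ρ] (a : E) :
      ∫ x, gaussianKernel E a x ∂ρ = ⟪Φ a, ∫ x, Φ x ∂ρ⟫_ℝ := by
    simp only [← integral_inner (hint ρ), ← hΦ, Matrix.gram_apply]
  exact ext_of_integral_gaussianKernel_eq fun a ↦ by rw [heval, heval, h]

end GaussianKernelIsCharacteristic

section SimilarityKernel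

/-- Leinster's similarity kernel `e^{-d(x,y)}` of a metric space, as a matrix indexed by its
points; it is the kernel of the form `simFormP`. -/
noncomputable def similarityKernel (X : Type*) [MetricSpace X] : Matrix X X ℝ :=
  .of fun x y ↦ exp (-dist x y)

variable {X : Type*} [MetricSpace X]

theorem continuous_similarityKernel : Continuous (Function.uncurry (similarityKernel X)) := by
  change Continuous fun p : X × X ↦ exp (-dist p.1 p.2)
  fun_prop

theorem similarityKernel_self (x : X) : similarityKernel X x x = 1 := by
  simp [similarityKernel]

theorem similarityKernel_eq_submatrix_gaussianKernel {E : Type*} [NormedAddCommGroup E]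
    {φ : X → E} (hφ : ∀ x y, ‖φ x - φ y‖ ^ 2 = dist x y) :
    similarityKernel X = (gaussianKernel E).submatrix φ φ := by
  ext x y
  simp [similarityKernel, gaussianKernel, hφ]

variable [SecondCountableTopology X] [MeasurableSpace X] [OpensMeasurableSpace X]
  {F : Type*} [NormedAddCommGroup F] [InnerProductSpace ℝ F] {Φ : X → F}

theorem integrable_similarityKernel_feature (hΦ : Matrix.gram ℝ Φ = similarityKernel X)
    (μ : Measure X) [IsFiniteMeasure μ] : Integrable Φ μ :=
  integrable_of_continuous_gram μ (hΦ ▸ continuous_similarityKernel) (hΦ ▸ similarityKernel_self)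

variable [CompleteSpace F]

theorem simFormP_eq_inner_integral (hΦ : Matrix.gram ℝ Φ = similarityKernel X)
    (μ ν : Measure X) [IsFiniteMeasure μ] [IsFiniteMeasure ν] :
    simFormP μ ν = ⟪∫ x, Φ x ∂μ, ∫ x, Φ x ∂ν⟫_ℝ := by
  rw [inner_integral_integral (integrable_similarityKernel_feature hΦ μ)
    (integrable_similarityKernel_feature hΦ ν)]
  simp only [← Matrix.gram_apply, hΦ]
  rfl

theorem integral_feature_eq_of_forall_simFormP_le (hΦ : Matrix.gram ℝ Φ = similarityKernel X)
    {μ ν : Measure X} [hμ : IsProbabilityMeasure μ] [hν : IsProbabilityMeasure ν]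
    (hμmin : ∀ ρ : Measure X, IsProbabilityMeasure ρ → simFormP μ μ ≤ simFormP ρ ρ)
    (hνmin : ∀ ρ : Measure X, IsProbabilityMeasure ρ → simFormP ν ν ≤ simFormP ρ ρ) :
    ∫ x, Φ x ∂μ = ∫ x, Φ x ∂ν := by
  have hnorm {ρ σ : Measure X} [IsProbabilityMeasure ρ] [IsProbabilityMeasure σ]
      (h : simFormP ρ ρ ≤ simFormP σ σ) : ‖∫ x, Φ x ∂ρ‖ ≤ ‖∫ x, Φ x ∂σ‖ := by
    rwa [simFormP_eq_inner_integral hΦ, simFormP_eq_inner_integral hΦ, real_inner_self_eq_norm_sq,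
      real_inner_self_eq_norm_sq, sq_le_sq₀ (norm_nonneg _) (norm_nonneg _)] at h
  let ρ : Measure X := (2⁻¹ : ENNReal) • (μ + ν)
  have hρ : IsProbabilityMeasure ρ := ⟨by simp [ρ, ENNReal.inv_two_add_inv_two]⟩
  have hmean : ∫ x, Φ x ∂ρ = (1 / 2 : ℝ) • (∫ x, Φ x ∂μ + ∫ x, Φ x ∂ν) := by
    rw [integral_smul_measure, integral_add_measure (integrable_similarityKernel_feature hΦ μ)
      (integrable_similarityKernel_feature hΦ ν)]
    simp
  have heq : ‖∫ x, Φ x ∂μ‖ = ‖∫ x, Φ x ∂ν‖ := (hnorm (hμmin ν hν)).antisymm (hnorm (hνmin μ hμ))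
  have hmid : ‖∫ x, Φ x ∂μ‖ ≤ ‖(1 / 2 : ℝ) • (∫ x, Φ x ∂μ + ∫ x, Φ x ∂ν)‖ :=
    hmean ▸ hnorm (hμmin ρ hρ)
  exact not_ne_iff.1 (mt (norm_midpoint_lt_iff heq).2 hmid.not_gt)

end SimilarityKernel

section NegativeType

theorem isInducing_of_norm_sub_sq_eq_dist {X E : Type*} [PseudoMetricSpace X]
    [SeminormedAddCommGroup E] {φ : X → E} (hφ : ∀ x y, ‖φ x - φ y‖ ^ 2 = dist x y) :
    IsInducing φ := by
  simp only [← dist_eq_norm] at hφ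
  refine (Metric.isUniformInducing_iff.2 ⟨?_, fun δ hδ ↦ ?_⟩).isInducing
  · refine Metric.uniformContinuous_iff.2 fun ε hε ↦ ⟨ε ^ 2, by positivity, fun {x y} h ↦ ?_⟩
    rw [← hφ] at h
    exact lt_of_pow_lt_pow_left₀ 2 hε.le h
  · refine ⟨√δ, sqrt_pos.2 hδ, fun {x y} h ↦ ?_⟩
    rw [← hφ]
    exact (lt_sqrt dist_nonneg).1 h

theorem measure_eq_of_map_eq_of_isInducing {X Y : Type*} [TopologicalSpace X]
    [MeasurableSpace X] [BorelSpace X] [TopologicalSpace Y] [MeasurableSpace Y] [BorelSpace Y]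
    {f : X → Y} (hf : IsInducing f) {μ ν : Measure X} (h : μ.map f = ν.map f) : μ = ν := by
  have hfm : Measurable f := hf.continuous.measurable
  ext s hs
  have hcomap : MeasurableSpace.comap f (borel Y) = borel X := by
    rw [hf.eq_induced, borel_comap]
  rw [BorelSpace.measurable_eq (α := X), ← hcomap, ← BorelSpace.measurable_eq (α := Y)] at hs
  obtain ⟨t, ht, rfl⟩ := hs
  rw [← Measure.map_apply hfm ht, h, Measure.map_apply hfm ht]

theorem exists_separable_hilbert_norm_sub_eq.{u} {X : Type*} {H : Type u} [NormedAddCommGroup H]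
    [InnerProductSpace ℝ H] {φ : X → H} (hφ : IsSeparable (Set.range φ)) :
    ∃ (E : Type u) (_ : NormedAddCommGroup E) (_ : InnerProductSpace ℝ E) (_ : CompleteSpace E)
      (_ : SecondCountableTopology E) (ψ : X → E), ∀ x y, ‖ψ x - ψ y‖ = ‖φ x - φ y‖ := by
  let S := Submodule.span ℝ (Set.range φ)
  have : SeparableSpace S := hφ.span.separableSpace
  refine ⟨UniformSpace.Completion S, inferInstance, inferInstance, inferInstance,
    UniformSpace.secondCountable_of_separable _,
    fun x ↦ ((⟨φ x, Submodule.subset_span ⟨x, rfl⟩⟩ : S) : UniformSpace.Completion S),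
    fun x y ↦ ?_⟩
  rw [← UniformSpace.Completion.coe_sub, UniformSpace.Completion.norm_coe]
  rfl

end NegativeType

theorem stmt5_general {X : Type*} [MetricSpace X] [SecondCountableTopology X]
    [MeasurableSpace X] [BorelSpace X]
    {H : Type*} [NormedAddCommGroup H] [InnerProductSpace ℝ H]
    (φ : X → H) (hφ : ∀ x y : X, ‖φ x - φ y‖ ^ 2 = dist x y)
    (μ ν : Measure X) (hμ : IsProbabilityMeasure μ) (hν : IsProbabilityMeasure ν)
    (hμmin : ∀ ρ : Measure X, IsProbabilityMeasure ρ → simFormP μ μ ≤ simFormP ρ ρ)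
    (hνmin : ∀ ρ : Measure X, IsProbabilityMeasure ρ → simFormP ν ν ≤ simFormP ρ ρ) :
    μ = ν := by
  have hsep : IsSeparable (Set.range φ) :=
    isSeparable_range (isInducing_of_norm_sub_sq_eq_dist hφ).continuous
  obtain ⟨E, _, _, _, _, ψ, hψ⟩ := exists_separable_hilbert_norm_sub_eq hsep
  simp only [← hψ] at hφ
  have hind : IsInducing ψ := isInducing_of_norm_sub_sq_eq_dist hφ
  obtain ⟨F, _, _, _, Φ, hΦ⟩ := exists_gram_eq_of_posSemidef (posSemidef_gaussianKernel (E := E))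
  have hΦψ : Matrix.gram ℝ (Φ ∘ ψ) = similarityKernel X := by
    rw [similarityKernel_eq_submatrix_gaussianKernel hφ, ← hΦ]
    rfl
  have hmean : ∫ x, Φ (ψ x) ∂μ = ∫ x, Φ (ψ x) ∂ν :=
    integral_feature_eq_of_forall_simFormP_le hΦψ hμmin hνmin
  borelize E
  refine measure_eq_of_map_eq_of_isInducing hind
    (ext_of_integral_gaussianKernel_feature_eq hΦ ?_)
  have hΦcont : Continuous Φ := continuous_of_continuous_gram (hΦ ▸ continuous_gaussianKernel)
  rwa [integral_map hind.continuous.aemeasurable hΦcont.aestronglyMeasurable,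
    integral_map hind.continuous.aemeasurable hΦcont.aestronglyMeasurable]

theorem stmt5 {X : Type*} [MetricSpace X] [CompactSpace X]
    [MeasurableSpace X] [BorelSpace X]
    {H : Type*} [NormedAddCommGroup H] [InnerProductSpace ℝ H] [CompleteSpace H]
    (φ : X → H) (hφ : ∀ x y : X, ‖φ x - φ y‖ ^ 2 = dist x y)
    (μ ν : Measure X) (hμ : IsProbabilityMeasure μ) (hν : IsProbabilityMeasure ν)
    (hμmin : ∀ ρ : Measure X, IsProbabilityMeasure ρ → simFormP μ μ ≤ simFormP ρ ρ)
    (hνmin : ∀ ρ : Measure X, IsProbabilityMeasure ρ → simFormP ν ν ≤ simFormP ρ ρ) :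
    μ = ν :=
  stmt5_general φ hφ μ ν hμ hν hμmin hνmin
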